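/- Let A, B : {0, …, U−1} → ℕ be nonnegative integer vectors, let p be a prime with 1 ≤ m ≤ p, fix σ, τ ∈ {0, …, p−1}, and let h(x) = ((σx + τ) mod p) mod m. Let V = h(A) ⋆_m h(B) and W = h(∂A) ⋆_m h(B) + h(A) ⋆_m h(∂B). Suppose x ∈ supp(A ⋆ B) is isolated, meaning there is no x′ ∈ supp(A ⋆ B) with x′ ≠ x such that h(x′) ≡ h(x) + o (mod m) for some o ∈ {−2p, −p, 0, p, 2p}. Then Σ_{i ∈ S} V_i = (A ⋆ B)_x, where S = { (h(0) + h(x) + o) mod m : o ∈ {−p, 0, p} } (a set, so each residue is counted once), and moreover W_i = x · V_i for every i ∈ S. -/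

import Mathlib

/-- The hashed vector `f(D)` of length `m` for the linear hash function
`f(i) = ((σi + τ) mod p) mod m`: `f(D)_j = ∑_{i : f(i) = j} D_i` (the vector `D` is
supported on `[U]`). -/
def hashVec (p m U σ τ : ℕ) (D : ℕ → ℕ) (j : ℕ) : ℕ :=
  ∑ i ∈ (Finset.range U).filter (fun i => ((σ * i + τ) % p) % m = j), D i

/-- The cyclic convolution of two length-`m` vectors: `(P ⋆_m Q)_i = ∑_{j<m} P_j Q_{(i−j) mod m}`. -/
def cyclicConv (m : ℕ) (P Q : ℕ → ℕ) (i : ℕ) : ℕ :=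
  ∑ j ∈ Finset.range m, P j * Q ((i + m - j) % m)

/-!
Reduction modulo `p` makes `σ v + τ` additive only up to a multiple of `p`, and the four residues
involved lie in `[0, p)`, so `h(y) + h(z) ≡ h(0) + h(y + z) + o (mod m)` with `o ∈ {-p, 0, p}`.
Hence every product `A_y B_z` with `y + z = x` falls into a bucket of `S`. Conversely, if a nonzero
`A_y B_z` falls into `S`, then `h(y + z)` and `h(x)` differ modulo `m` by a difference of two such
offsets, and isolation forces `y + z = x`; nonnegativity excludes cancellation, which would remove
`y + z` from the support. By the Leibniz rule `W_i` weighs each product in bucket `i` by `y + z`.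
-/

/-- The hash function `h(v) = ((σ v + τ) mod p) mod m`. -/
def linearHash (p m σ τ v : ℕ) : ℕ :=
  (σ * v + τ) % p % m

/-- The coordinate `(A ⋆ B)_x` of the (non-cyclic) convolution. -/
def linearConv (A B : ℕ → ℕ) (x : ℕ) : ℕ :=
  ∑ q ∈ Finset.HasAntidiagonal.antidiagonal x, A q.1 * B q.2

/-- The set `S` of buckets of the cyclic convolution of two hashed vectors over which the
contributions to coordinate `x` of the convolution are spread. As a `Finset`, it counts coinciding
residues once. -/
def convBuckets (p m σ τ x : ℕ) : Finset ℕ :=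
  ({-(p : ℤ), 0, (p : ℤ)} : Finset ℤ).image fun o =>
    (((linearHash p m σ τ 0 : ℤ) + (linearHash p m σ τ x : ℤ) + o) % (m : ℤ)).toNat

/-- The index `x` is isolated: no other index in the support of `A ⋆ B` has a hash value that agrees
with that of `x` modulo `m` up to one of the offsets `0, ±p, ±2p`. Membership of `x` itself in the
support is not part of this notion. -/
def IsIsolated (p m σ τ : ℕ) (A B : ℕ → ℕ) (x : ℕ) : Prop :=
  ∀ x', linearConv A B x' ≠ 0 → x' ≠ x →
    ∀ o ∈ ({-2 * (p : ℤ), -(p : ℤ), 0, (p : ℤ), 2 * (p : ℤ)} : Finset ℤ),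
      ¬ (linearHash p m σ τ x' : ℤ) ≡ (linearHash p m σ τ x : ℤ) + o [ZMOD (m : ℤ)]

theorem exists_eq_add_of_modEq_of_abs_sub_lt {n u v : ℤ} (h : u ≡ v [ZMOD n])
    (hlt : |u - v| < 2 * n) : ∃ o ∈ ({-n, 0, n} : Finset ℤ), u = v + o := by
  obtain ⟨k, hk⟩ := h.symm.dvd
  have hn : 0 < n := by linarith [abs_nonneg (u - v)]
  have hk_abs : |k| < 2 := by
    rw [hk, abs_mul, abs_of_pos hn, mul_comm] at hlt
    exact lt_of_mul_lt_mul_right hlt hn.le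
  have hk_cases : k = -1 ∨ k = 0 ∨ k = 1 := by
    rw [abs_lt] at hk_abs
    omega
  refine ⟨n * k, ?_, by linarith⟩
  rcases hk_cases with rfl | rfl | rfl <;> simp

theorem linearConv_add_ne_zero_of_mul_ne_zero {A B : ℕ → ℕ} {y z : ℕ} (h : A y * B z ≠ 0) :
    linearConv A B (y + z) ≠ 0 := fun hzero =>
  h (Finset.sum_eq_zero_iff.mp hzero (y, z) (Finset.HasAntidiagonal.mem_antidiagonal.mpr rfl))

theorem sum_filter_add_eq_linearConv {U : ℕ} {A B : ℕ → ℕ} (hA : ∀ i, U ≤ i → A i = 0)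
    (hB : ∀ i, U ≤ i → B i = 0) (x : ℕ) :
    ∑ q ∈ Finset.range U ×ˢ Finset.range U with q.1 + q.2 = x, A q.1 * B q.2
      = linearConv A B x := by
  refine Finset.sum_subset (fun q hq => ?_) (fun q hq hq_out => ?_)
  · exact Finset.HasAntidiagonal.mem_antidiagonal.mpr (Finset.mem_filter.mp hq).2
  · have hU : U ≤ q.1 ∨ U ≤ q.2 := by
      simp only [Finset.mem_filter, Finset.mem_product, Finset.mem_range,
        Finset.HasAntidiagonal.mem_antidiagonal.mp hq, and_true] at hq_out
      omega
    rcases hU with h | h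
    · rw [hA _ h, zero_mul]
    · rw [hB _ h, mul_zero]

theorem eq_add_sub_mod_iff {m a b i : ℕ} (ha : a < m) (hb : b < m) (hi : i < m) :
    b = (i + m - a) % m ↔ (a + b) % m = i := by
  have hsub : i + m - a + a = i + m := by omega
  calc b = (i + m - a) % m
      ↔ i + m - a ≡ b [MOD m] := by rw [Nat.ModEq, Nat.mod_eq_of_lt hb, eq_comm]
    _ ↔ i + m ≡ b + a [MOD m] := by
      rw [← Nat.ModEq.add_iff_right (Nat.ModEq.refl a), hsub]
    _ ↔ (a + b) % m = i := by
      rw [Nat.ModEq, Nat.add_mod_right, Nat.mod_eq_of_lt hi, add_comm b, eq_comm]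

theorem cyclicConv_sum_fiber {ι κ : Type*} {m i : ℕ} {s : Finset ι} {t : Finset κ}
    {f : ι → ℕ} {g : κ → ℕ} (hf : ∀ y ∈ s, f y < m) (hg : ∀ z ∈ t, g z < m) (hi : i < m)
    (D : ι → ℕ) (E : κ → ℕ) :
    cyclicConv m (fun j => ∑ y ∈ s with f y = j, D y) (fun j => ∑ z ∈ t with g z = j, E z) i
      = ∑ q ∈ s ×ˢ t with (f q.1 + g q.2) % m = i, D q.1 * E q.2 := by
  calc cyclicConv m (fun j => ∑ y ∈ s with f y = j, D y) (fun j => ∑ z ∈ t with g z = j, E z) i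
      = ∑ j ∈ Finset.range m, ∑ y ∈ s with f y = j,
          D y * ∑ z ∈ t with g z = (i + m - f y) % m, E z := by
        refine Finset.sum_congr rfl fun j _ => ?_
        rw [Finset.sum_mul]
        refine Finset.sum_congr rfl fun y hy => ?_
        rw [(Finset.mem_filter.mp hy).2]
    _ = ∑ y ∈ s, D y * ∑ z ∈ t with g z = (i + m - f y) % m, E z :=
        Finset.sum_fiberwise_of_maps_to (fun y hy => Finset.mem_range.mpr (hf y hy)) _
    _ = ∑ y ∈ s, ∑ z ∈ t, if (f y + g z) % m = i then D y * E z else 0 := by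
        refine Finset.sum_congr rfl fun y hy => ?_
        rw [Finset.mul_sum, Finset.sum_filter]
        refine Finset.sum_congr rfl fun z hz => ?_
        simp only [eq_add_sub_mod_iff (hf y hy) (hg z hz) hi]
    _ = ∑ q ∈ s ×ˢ t with (f q.1 + g q.2) % m = i, D q.1 * E q.2 := by
        rw [Finset.sum_filter, Finset.sum_product]

section LinearHash

variable {p m U σ τ x i : ℕ} {A B : ℕ → ℕ}

theorem linearHash_add_modEq (hp : 0 < p) (m σ τ y z : ℕ) :
    ∃ o ∈ ({-(p : ℤ), 0, (p : ℤ)} : Finset ℤ),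
      (linearHash p m σ τ y : ℤ) + linearHash p m σ τ z
        ≡ linearHash p m σ τ 0 + linearHash p m σ τ (y + z) + o [ZMOD m] := by
  let r (v : ℕ) : ℕ := (σ * v + τ) % p
  have hr_lt (v : ℕ) : r v < p := Nat.mod_lt _ hp
  have hr_modEq (v : ℕ) : (r v : ℤ) ≡ σ * v + τ [ZMOD p] := by
    exact_mod_cast Nat.mod_modEq (σ * v + τ) p
  have hhash (v : ℕ) : (linearHash p m σ τ v : ℤ) ≡ r v [ZMOD m] := by
    exact_mod_cast Nat.mod_modEq (r v) m
  have hr_add : (r y : ℤ) + r z ≡ r 0 + r (y + z) [ZMOD p] :=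
    calc (r y : ℤ) + r z
        ≡ (σ * y + τ) + (σ * z + τ) [ZMOD p] := (hr_modEq y).add (hr_modEq z)
      _ = (σ * (0 : ℕ) + τ) + (σ * (y + z : ℕ) + τ) := by push_cast; ring
      _ ≡ r 0 + r (y + z) [ZMOD p] := ((hr_modEq 0).add (hr_modEq (y + z))).symm
  have habs : |((r y : ℤ) + r z) - (r 0 + r (y + z))| < 2 * p := by
    have := hr_lt y
    have := hr_lt z
    have := hr_lt 0
    have := hr_lt (y + z)
    rw [abs_lt]
    omega
  obtain ⟨o, ho, heq⟩ := exists_eq_add_of_modEq_of_abs_sub_lt hr_add habs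
  refine ⟨o, ho, ((hhash y).add (hhash z)).trans ?_⟩
  rw [heq]
  exact (((hhash 0).add (hhash (y + z))).add_right o).symm

theorem mem_convBuckets (hm : 0 < m) :
    i ∈ convBuckets p m σ τ x ↔ i < m ∧ ∃ o ∈ ({-(p : ℤ), 0, (p : ℤ)} : Finset ℤ),
      (i : ℤ) ≡ linearHash p m σ τ 0 + linearHash p m σ τ x + o [ZMOD m] := by
  have hm_pos : (0 : ℤ) < m := by exact_mod_cast hm
  rw [convBuckets, Finset.mem_image]
  constructor
  · rintro ⟨o, ho, rfl⟩
    have hlt := Int.emod_lt_of_pos (linearHash p m σ τ 0 + linearHash p m σ τ x + o : ℤ) hm_pos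
    refine ⟨by omega, o, ho, ?_⟩
    rw [Int.toNat_of_nonneg (Int.emod_nonneg _ hm_pos.ne')]
    exact Int.mod_modEq _ _
  · rintro ⟨hi, o, ho, hmod⟩
    refine ⟨o, ho, ?_⟩
    rw [← hmod, Int.emod_eq_of_lt (Int.natCast_nonneg i) (by exact_mod_cast hi), Int.toNat_natCast]

theorem linearHash_add_mod_mem_convBuckets (hp : 0 < p) (hm : 0 < m) (σ τ y z : ℕ) :
    (linearHash p m σ τ y + linearHash p m σ τ z) % m ∈ convBuckets p m σ τ (y + z) := by
  obtain ⟨o, ho, hmod⟩ := linearHash_add_modEq hp m σ τ y z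
  refine (mem_convBuckets hm).mpr ⟨Nat.mod_lt _ hm, o, ho, ?_⟩
  push_cast
  exact (Int.mod_modEq _ _).trans hmod

theorem exists_linearHash_modEq_of_mem_convBuckets (hm : 0 < m) {x' : ℕ}
    (hx : i ∈ convBuckets p m σ τ x) (hx' : i ∈ convBuckets p m σ τ x') :
    ∃ o ∈ ({-2 * (p : ℤ), -(p : ℤ), 0, (p : ℤ), 2 * (p : ℤ)} : Finset ℤ),
      (linearHash p m σ τ x' : ℤ) ≡ linearHash p m σ τ x + o [ZMOD m] := by
  obtain ⟨-, o, ho, hmod⟩ := (mem_convBuckets hm).mp hx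
  obtain ⟨-, o', ho', hmod'⟩ := (mem_convBuckets hm).mp hx'
  refine ⟨o - o', ?_, ?_⟩
  · simp only [Finset.mem_insert, Finset.mem_singleton] at ho ho' ⊢
    omega
  · convert (hmod'.symm.trans hmod).sub_right (linearHash p m σ τ 0 + o' : ℤ) using 1 <;> ring

theorem IsIsolated.linearHash_add_mod_mem_convBuckets_iff (hx : IsIsolated p m σ τ A B x)
    (hp : 0 < p) (hm : 0 < m) {y z : ℕ} (hyz : A y * B z ≠ 0) :
    (linearHash p m σ τ y + linearHash p m σ τ z) % m ∈ convBuckets p m σ τ x ↔ y + z = x := by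
  have hmem := linearHash_add_mod_mem_convBuckets hp hm σ τ y z
  refine ⟨fun hmem_x => ?_, fun h => h ▸ hmem⟩
  by_contra hne
  obtain ⟨o, ho, hmod⟩ := exists_linearHash_modEq_of_mem_convBuckets hm hmem_x hmem
  exact hx _ (linearConv_add_ne_zero_of_mul_ne_zero hyz) hne o ho hmod

theorem cyclicConv_hashVec (hi : i < m) (D E : ℕ → ℕ) :
    cyclicConv m (hashVec p m U σ τ D) (hashVec p m U σ τ E) i
      = ∑ q ∈ Finset.range U ×ˢ Finset.range U with
          (linearHash p m σ τ q.1 + linearHash p m σ τ q.2) % m = i, D q.1 * E q.2 :=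
  have hlt (v : ℕ) : linearHash p m σ τ v < m := Nat.mod_lt _ (Nat.zero_lt_of_lt hi)
  cyclicConv_sum_fiber (fun y _ => hlt y) (fun z _ => hlt z) hi D E

theorem cyclicConv_hashVec_leibniz (hi : i < m) (D E : ℕ → ℕ) :
    cyclicConv m (hashVec p m U σ τ fun t => t * D t) (hashVec p m U σ τ E) i
        + cyclicConv m (hashVec p m U σ τ D) (hashVec p m U σ τ fun t => t * E t) i
      = ∑ q ∈ Finset.range U ×ˢ Finset.range U with
          (linearHash p m σ τ q.1 + linearHash p m σ τ q.2) % m = i,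
          (q.1 + q.2) * (D q.1 * E q.2) := by
  rw [cyclicConv_hashVec hi, cyclicConv_hashVec hi, ← Finset.sum_add_distrib]
  exact Finset.sum_congr rfl fun q _ => by ring

theorem IsIsolated.sum_cyclicConv_hashVec (hx : IsIsolated p m σ τ A B x) (hp : 0 < p) (hm : 0 < m)
    (hA : ∀ i, U ≤ i → A i = 0) (hB : ∀ i, U ≤ i → B i = 0) :
    ∑ i ∈ convBuckets p m σ τ x, cyclicConv m (hashVec p m U σ τ A) (hashVec p m U σ τ B) i
      = linearConv A B x := by
  rw [Finset.sum_congr rfl fun i hi => cyclicConv_hashVec ((mem_convBuckets hm).mp hi).1 A B,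
    Finset.sum_fiberwise_eq_sum_filter, ← sum_filter_add_eq_linearConv hA hB,
    Finset.sum_filter, Finset.sum_filter]
  refine Finset.sum_congr rfl fun q _ => ?_
  by_cases hzero : A q.1 * B q.2 = 0
  · simp only [hzero, ite_self]
  · simp only [hx.linearHash_add_mod_mem_convBuckets_iff hp hm hzero]

theorem IsIsolated.cyclicConv_hashVec_leibniz_eq_mul (hx : IsIsolated p m σ τ A B x) (hp : 0 < p)
    (hm : 0 < m) (hi : i ∈ convBuckets p m σ τ x) :
    cyclicConv m (hashVec p m U σ τ fun t => t * A t) (hashVec p m U σ τ B) i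
        + cyclicConv m (hashVec p m U σ τ A) (hashVec p m U σ τ fun t => t * B t) i
      = x * cyclicConv m (hashVec p m U σ τ A) (hashVec p m U σ τ B) i := by
  have hi_lt : i < m := ((mem_convBuckets hm).mp hi).1
  rw [cyclicConv_hashVec_leibniz hi_lt, cyclicConv_hashVec hi_lt, Finset.mul_sum]
  refine Finset.sum_congr rfl fun q hq => ?_
  by_cases hzero : A q.1 * B q.2 = 0
  · rw [hzero, mul_zero, mul_zero]
  · have hbucket := (Finset.mem_filter.mp hq).2
    rw [(hx.linearHash_add_mod_mem_convBuckets_iff hp hm hzero).mp (hbucket ▸ hi)]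

theorem stmt_19_general (hp : 0 < p) (hm : 0 < m)
    (hA : ∀ i, U ≤ i → A i = 0) (hB : ∀ i, U ≤ i → B i = 0) (hx : IsIsolated p m σ τ A B x) :
    (∑ i ∈ convBuckets p m σ τ x, cyclicConv m (hashVec p m U σ τ A) (hashVec p m U σ τ B) i
      = linearConv A B x) ∧
    ∀ i ∈ convBuckets p m σ τ x,
      cyclicConv m (hashVec p m U σ τ fun t => t * A t) (hashVec p m U σ τ B) i
          + cyclicConv m (hashVec p m U σ τ A) (hashVec p m U σ τ fun t => t * B t) i
        = x * cyclicConv m (hashVec p m U σ τ A) (hashVec p m U σ τ B) i :=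
  ⟨hx.sum_cyclicConv_hashVec hp hm hA hB, fun _ hi => hx.cyclicConv_hashVec_leibniz_eq_mul hp hm hi⟩

end LinearHash

/-- Isolated indices are recovered. Let `A, B` be nonnegative vectors
supported on `[U]`, `p` a prime, `1 ≤ m ≤ p`, `σ, τ ∈ [p]` fixed, and
`h(v) = ((σv + τ) mod p) mod m`. Let `V = h(A) ⋆_m h(B)` and
`W = h(∂A) ⋆_m h(B) + h(A) ⋆_m h(∂B)`. If `x ∈ supp(A ⋆ B)` is isolated — no other
`x′ ∈ supp(A ⋆ B)` has `h(x′) ≡ h(x) + o (mod m)` for some `o ∈ {−2p, −p, 0, p, 2p}` —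
then `∑_{i ∈ S} V_i = (A ⋆ B)_x` where `S = {(h(0) + h(x) + o) mod m : o ∈ {−p, 0, p}}`,
and `W_i = x · V_i` for every `i ∈ S`. -/
theorem stmt_19 (U p m σ τ : ℕ) (hp : p.Prime) (hm : 1 ≤ m) (hmp : m ≤ p)
    (hσ : σ < p) (hτ : τ < p) (A B : ℕ → ℕ)
    (hA : ∀ i, U ≤ i → A i = 0) (hB : ∀ i, U ≤ i → B i = 0)
    (x : ℕ)
    (hx : (∑ q ∈ Finset.HasAntidiagonal.antidiagonal x, A q.1 * B q.2) ≠ 0)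
    (hiso : ∀ x' : ℕ, (∑ q ∈ Finset.HasAntidiagonal.antidiagonal x', A q.1 * B q.2) ≠ 0 → x' ≠ x →
      ∀ o ∈ ({-2 * (p : ℤ), -(p : ℤ), 0, (p : ℤ), 2 * (p : ℤ)} : Finset ℤ),
        ¬ (((((σ * x' + τ) % p) % m : ℕ) : ℤ)
            ≡ ((((σ * x + τ) % p) % m : ℕ) : ℤ) + o [ZMOD (m : ℤ)])) :
    (∑ i ∈ (({-(p : ℤ), 0, (p : ℤ)} : Finset ℤ).image (fun o =>
        (((((σ * 0 + τ) % p) % m : ℕ) + ((((σ * x + τ) % p) % m : ℕ) : ℤ) + o)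
          % (m : ℤ)).toNat)),
      cyclicConv m (hashVec p m U σ τ A) (hashVec p m U σ τ B) i)
      = (∑ q ∈ Finset.HasAntidiagonal.antidiagonal x, A q.1 * B q.2)
    ∧ ∀ i ∈ (({-(p : ℤ), 0, (p : ℤ)} : Finset ℤ).image (fun o =>
        (((((σ * 0 + τ) % p) % m : ℕ) + ((((σ * x + τ) % p) % m : ℕ) : ℤ) + o)
          % (m : ℤ)).toNat)),
        cyclicConv m (hashVec p m U σ τ (fun t => t * A t)) (hashVec p m U σ τ B) i
          + cyclicConv m (hashVec p m U σ τ A) (hashVec p m U σ τ (fun t => t * B t)) i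
        = x * cyclicConv m (hashVec p m U σ τ A) (hashVec p m U σ τ B) i :=
  stmt_19_general hp.pos hm hA hB hiso
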